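/- Let p ≥ 7 be an odd integer. Let U : (0,∞) → ℝ be twice differentiable, satisfy U''(x) + (2/x)U'(x) + U(x)^p = 0 for all x > 0, and suppose U(x) → 1 and U'(x) → 0 as x → 0⁺. Then x^{2/(p−1)}·U(x) → b∞ as x → ∞, and x·d/dx(x^{2/(p−1)}U(x)) → 0 as x → ∞. -/

import Mathlib

open Set Real Filter

/-- The exponent `α = 2/(p-1)`. -/
noncomputable def alphaP (p : ℕ) : ℝ := 2 / ((p : ℝ) - 1)

/-- `b₀ = (2(p+1)/(p-1)²)^(1/(p-1))`, the constant solution. -/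
noncomputable def bZero (p : ℕ) : ℝ :=
  (2 * ((p : ℝ) + 1) / ((p : ℝ) - 1) ^ 2) ^ ((1 : ℝ) / ((p : ℝ) - 1))

/-- `b∞ = (2(p-3)/(p-1)²)^(1/(p-1))`. -/
noncomputable def bInfty (p : ℕ) : ℝ :=
  (2 * ((p : ℝ) - 3) / ((p : ℝ) - 1) ^ 2) ^ ((1 : ℝ) / ((p : ℝ) - 1))

/-- The singular static solution `u∞(ρ) = b∞ ρ^(-α)`. -/
noncomputable def uInfty (p : ℕ) (ρ : ℝ) : ℝ := bInfty p * ρ ^ (-(alphaP p))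

/-- The self-similar profile equation
`(1-ρ²)u'' + (2/ρ - (2+2α)ρ)u' - α(α+1)u + u^p = 0` at the point `ρ`. -/
def ProfileEq (p : ℕ) (u : ℝ → ℝ) (ρ : ℝ) : Prop :=
  (1 - ρ ^ 2) * deriv (deriv u) ρ + (2 / ρ - (2 + 2 * alphaP p) * ρ) * deriv u ρ
    - alphaP p * (alphaP p + 1) * u ρ + u ρ ^ p = 0

lemma barbalat_aux (W W' h h' : ℝ → ℝ) (T L B : ℝ)
    (hW : ∀ t, T ≤ t → HasDerivAt W (W' t) t) (hh : ∀ t, T ≤ t → HasDerivAt h (h' t) t)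
    (h0 : ∀ t, 0 ≤ h t) (hWh : ∀ t, T ≤ t → W' t ≤ - h t)
    (hL : ∀ t, T ≤ t → |h' t| ≤ L) (hB : ∀ t, T ≤ t → B ≤ W t) :
    Tendsto h atTop (nhds 0) := by
  have hL0 : 0 ≤ L := (abs_nonneg _).trans (hL T le_rfl)
  have key : ∀ s t, T ≤ s → s ≤ t → W t ≤ W s := by
    have : AntitoneOn W (Ici T) := by
      apply antitoneOn_of_deriv_nonpos (convex_Ici T)
      · intro t ht
        exact (hW t ht).continuousAt.continuousWithinAt
      · intro t ht
        rw [interior_Ici] at ht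
        exact (hW t (le_of_lt ht)).differentiableAt.differentiableWithinAt
      · intro t ht
        rw [interior_Ici] at ht
        rw [(hW t (le_of_lt ht)).deriv]
        linarith [h0 t, hWh t (le_of_lt ht)]
    intro s t hs hst
    exact this hs (hs.trans hst) hst
  -- infimum
  set S : Set ℝ := W '' (Ici T) with hS
  have hSne : S.Nonempty := ⟨W T, T, self_mem_Ici, rfl⟩
  have hSb : BddBelow S := ⟨B, by rintro _ ⟨t, ht, rfl⟩; exact hB t ht⟩
  rw [Metric.tendsto_atTop]
  intro ε hε
  set d : ℝ := ε / (4 * (L + 1)) with hd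
  have hdpos : 0 < d := by positivity
  have hLd : L * d ≤ ε / 4 := by
    rw [hd, ← mul_div_assoc, div_le_div_iff₀ (by positivity) (by norm_num)]
    nlinarith
  obtain ⟨w, ⟨N, hN, rfl⟩, hw⟩ := exists_lt_of_csInf_lt hSne
    (show sInf S < sInf S + d * (ε / 2) by nlinarith [mul_pos hdpos hε])
  refine ⟨N, fun t ht => ?_⟩
  have htT : T ≤ t := le_trans hN ht
  have h1 : W t ≤ W N := key N t hN ht
  have h2 : sInf S ≤ W (t + d) := csInf_le hSb ⟨t + d, by simp only [mem_Ici]; linarith, rfl⟩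
  obtain ⟨ξ, hξ, hξe⟩ := exists_hasDerivAt_eq_slope W W' (show t < t + d by linarith)
    (fun s hs => (hW s (htT.trans hs.1)).continuousAt.continuousWithinAt)
    (fun s hs => hW s (htT.trans hs.1.le))
  have hξT : T ≤ ξ := htT.trans hξ.1.le
  have h3 : h ξ ≤ ε / 2 := by
    have e := hWh ξ hξT
    rw [hξe] at e
    have : (W (t + d) - W t) / (t + d - t) ≥ - (ε / 2) := by
      rw [ge_iff_le, le_div_iff₀ (by linarith)]
      nlinarith
    linarith
  obtain ⟨η, hη, hηe⟩ := exists_hasDerivAt_eq_slope h h' hξ.1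
    (fun s hs => (hh s (htT.trans hs.1)).continuousAt.continuousWithinAt)
    (fun s hs => hh s (htT.trans hs.1.le))
  have hb := hL η (htT.trans hη.1.le)
  rw [hηe, abs_div, div_le_iff₀ (by have := hξ.1; exact abs_pos.mpr (by linarith)),
    abs_of_pos (show 0 < ξ - t by linarith [hξ.1])] at hb
  have h4 : L * (ξ - t) ≤ L * d := by
    apply mul_le_mul_of_nonneg_left _ hL0
    linarith [hξ.2]
  rw [Real.dist_eq, sub_zero, abs_of_nonneg (h0 t)]
  linarith [(abs_le.mp hb).1]

lemma autonomous_aux (n : ℕ) (hn : Even n) (hn2 : 2 ≤ n) (k m : ℝ) (hk : 0 < k) (hm : 0 < m)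
    (V P : ℝ → ℝ) (hV : ∀ t, HasDerivAt V (P t) t)
    (hP : ∀ t, HasDerivAt P (-k * P t - (V t ^ (n + 1) - m * V t)) t)
    (hV0 : Tendsto V atBot (nhds 0)) (hP0 : Tendsto P atBot (nhds 0))
    (hVp : ∀ᶠ t in atBot, 0 < V t) (hPp : ∀ᶠ t in atBot, 0 < P t) :
    Tendsto V atTop (nhds (m ^ ((1 : ℝ) / n))) ∧ Tendsto P atTop (nhds 0) := by
  set E : ℝ → ℝ := fun t => P t ^ 2 / 2 + V t ^ (n + 2) / (n + 2) - m * V t ^ 2 / 2 with hE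
  have hEd : ∀ t, HasDerivAt E (-k * P t ^ 2) t := by
    intro t
    have := (((hP t).pow 2).div_const 2).add (((hV t).pow (n + 2)).div_const (n + 2 : ℝ))
      |>.sub ((((hV t).pow 2).const_mul m).div_const 2)
    refine this.congr_deriv ?_
    have : (n + 2 : ℝ) ≠ 0 := by positivity
    push_cast
    field_simp
    ring
  have hEanti : Antitone E := by
    apply antitone_of_deriv_nonpos (fun t => (hEd t).differentiableAt)
    intro t
    rw [(hEd t).deriv]
    nlinarith [sq_nonneg (P t)]
  have hE0 : Tendsto E atBot (nhds 0) := by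
    have := (((hP0.pow 2).div_const 2).add ((hV0.pow (n + 2)).div_const (n + 2 : ℝ))).sub
      (((hV0.pow 2).const_mul m).div_const 2)
    simpa using this
  have hEle : ∀ t, E t ≤ 0 := fun t =>
    ge_of_tendsto hE0 ((eventually_le_atBot t).mono fun s hs => hEanti hs)
  obtain ⟨T, hT⟩ := eventually_atBot.mp (hVp.and hPp)
  have hET : E T < 0 := by
    obtain ⟨ξ, hξ, hξe⟩ := exists_hasDerivAt_eq_slope E _ (show T - 1 < T by linarith)
      (fun s _ => (hEd s).continuousAt.continuousWithinAt) (fun s _ => hEd s)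
    have := (hT ξ hξ.2.le).2
    have h1 := hEle (T - 1)
    rw [show T - (T - 1) = 1 by ring, div_one] at hξe
    have : 0 < k * P ξ ^ 2 := by positivity
    linarith
  have hVsq : ∀ t, T ≤ t → -E T * 2 ≤ m * V t ^ 2 := by
    intro t ht
    have h1 := hEanti ht
    have h2 : 0 ≤ V t ^ (n + 2) / (n + 2) :=
      div_nonneg ((hn.add even_two).pow_nonneg _) (by positivity)
    have h3 : E t = P t ^ 2 / 2 + V t ^ (n + 2) / (n + 2) - m * V t ^ 2 / 2 := rfl
    nlinarith [sq_nonneg (P t)]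
  have hVcont : Continuous V := continuous_iff_continuousAt.mpr fun t => (hV t).continuousAt
  have hVpos : ∀ t, T ≤ t → 0 < V t := by
    intro t ht
    by_contra hcon
    push Not at hcon
    obtain ⟨s, hs, hs0⟩ := intermediate_value_Icc' ht hVcont.continuousOn
      ⟨hcon, (hT T le_rfl).1.le⟩
    have := hVsq s hs.1
    rw [hs0] at this
    nlinarith
  obtain ⟨c, hc, hcV⟩ : ∃ c : ℝ, 0 < c ∧ ∀ t, T ≤ t → c ≤ V t := by
    refine ⟨√(-E T * 2 / m), Real.sqrt_pos.mpr (div_pos (by linarith) hm), fun t ht => ?_⟩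
    rw [Real.sqrt_le_left (hVpos t ht).le, div_le_iff₀ hm]
    linarith [hVsq t ht]
  set M : ℝ := 1 + m * (n + 2) / 2 with hM
  have hM1 : 1 ≤ M := by
    have : 0 ≤ m * (n + 2) / 2 := by positivity
    linarith
  have hVM : ∀ t, T ≤ t → V t ≤ M := by
    intro t ht
    by_contra hcon
    push Not at hcon
    have h3 : E t = P t ^ 2 / 2 + V t ^ (n + 2) / (n + 2) - m * V t ^ 2 / 2 := rfl
    have h4 : V t ^ (n + 2) / (n + 2) ≤ m * V t ^ 2 / 2 := by
      nlinarith [sq_nonneg (P t), hEle t]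
    rw [div_le_iff₀ (by positivity), pow_add] at h4
    have h5 : V t ^ n ≤ m * (n + 2) / 2 := by
      have : 0 < V t ^ 2 := by have := hVpos t ht; positivity
      refine le_of_mul_le_mul_right (h4.trans_eq ?_) this
      ring
    have h6 : V t ≤ V t ^ n := le_self_pow₀ (by linarith) (by omega)
    linarith
  have hPM : ∀ t, T ≤ t → |P t| ≤ (1 + m) * M := by
    intro t ht
    apply abs_le_of_sq_le_sq _ (by positivity)
    have h3 : E t = P t ^ 2 / 2 + V t ^ (n + 2) / (n + 2) - m * V t ^ 2 / 2 := rfl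
    have h2 : 0 ≤ V t ^ (n + 2) / (n + 2) :=
      div_nonneg ((hn.add even_two).pow_nonneg _) (by positivity)
    have h4 : P t ^ 2 ≤ m * V t ^ 2 := by nlinarith [hEle t]
    have h5 : V t ^ 2 ≤ M ^ 2 := by
      have := hVpos t ht
      have := hVM t ht
      gcongr
    have h6 : m * V t ^ 2 ≤ m * M ^ 2 := by gcongr
    have h7 : m * M ^ 2 ≤ (1 + m) ^ 2 * M ^ 2 := by
      apply mul_le_mul_of_nonneg_right _ (sq_nonneg _)
      nlinarith
    rw [mul_pow]
    linarith
  set K : Set (ℝ × ℝ) := Icc 0 M ×ˢ Icc (-((1 + m) * M)) ((1 + m) * M) with hK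
  have hKc : IsCompact K := isCompact_Icc.prod isCompact_Icc
  have hKm : ∀ t, T ≤ t → (V t, P t) ∈ K := fun t ht =>
    ⟨⟨(hVpos t ht).le, hVM t ht⟩, abs_le.mp (hPM t ht)⟩
  have bd : ∀ F : ℝ × ℝ → ℝ, Continuous F → ∃ C, ∀ t, T ≤ t → |F (V t, P t)| ≤ C := by
    intro F hF
    obtain ⟨C, hC⟩ := hKc.exists_bound_of_continuousOn hF.continuousOn
    exact ⟨C, fun t ht => hC _ (hKm t ht)⟩
  obtain ⟨G, hG⟩ := bd (fun z => (n + 1) * z.1 ^ n - m) (by fun_prop)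
  have hG0 : 0 ≤ G := (abs_nonneg _).trans (hG T le_rfl)
  set ε : ℝ := k / (2 * G + k ^ 2 + 1) with hε
  have hεpos : 0 < ε := by positivity
  have hεk : ε * (2 * G + k ^ 2 + 1) = k := by rw [hε]; field_simp
  set g : ℝ → ℝ := fun t => V t ^ (n + 1) - m * V t with hg
  have hgd : ∀ t, HasDerivAt g (((n + 1) * V t ^ n - m) * P t) t := by
    intro t
    refine (((hV t).pow (n + 1)).sub ((hV t).const_mul m)).congr_deriv ?_
    push_cast
    ring
  set W : ℝ → ℝ := fun t => E t + ε * (P t * g t) with hW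
  set h : ℝ → ℝ := fun t => k / 2 * P t ^ 2 + ε / 2 * g t ^ 2 with hh
  have hWd : ∀ t, HasDerivAt W (-k * P t ^ 2 + ε * ((-k * P t - g t) * g t +
      P t * (((n + 1) * V t ^ n - m) * P t))) t := fun t =>
    (hEd t).add (((hP t).mul (hgd t)).const_mul ε)
  have hhd : ∀ t, HasDerivAt h (k * P t * (-k * P t - g t) +
      ε * g t * (((n + 1) * V t ^ n - m) * P t)) t := by
    intro t
    refine ((((hP t).pow 2).const_mul (k / 2)).add
      (((hgd t).pow 2).const_mul (ε / 2))).congr_deriv ?_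
    simp only [hg]
    push_cast
    ring
  obtain ⟨L, hL⟩ := bd (fun z => k * z.2 * (-k * z.2 - (z.1 ^ (n + 1) - m * z.1)) +
      ε * (z.1 ^ (n + 1) - m * z.1) * (((n + 1) * z.1 ^ n - m) * z.2)) (by fun_prop)
  obtain ⟨B, hB⟩ := bd (fun z => z.2 ^ 2 / 2 + z.1 ^ (n + 2) / (n + 2) - m * z.1 ^ 2 / 2 +
      ε * (z.2 * (z.1 ^ (n + 1) - m * z.1))) (by fun_prop)
  have hlim : Tendsto h atTop (nhds 0) := by
    refine barbalat_aux W _ h _ T L (-B) (fun t _ => hWd t) (fun t _ => hhd t) ?_ ?_ hL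
      (fun t ht => (abs_le.mp (hB t ht)).1)
    · intro t
      simp only [hh]
      positivity
    · intro t ht
      have a1 : ((n + 1) * V t ^ n - m) * P t ^ 2 ≤ G * P t ^ 2 :=
        mul_le_mul_of_nonneg_right ((le_abs_self _).trans (hG t ht)) (sq_nonneg _)
      have a2 : -k * P t * g t ≤ g t ^ 2 / 2 + k ^ 2 / 2 * P t ^ 2 := by
        nlinarith [sq_nonneg (k * P t + g t)]
      have a3 : ε * ((-k * P t - g t) * g t + P t * (((n + 1) * V t ^ n - m) * P t)) ≤
          ε * (G * P t ^ 2 + k ^ 2 / 2 * P t ^ 2 - g t ^ 2 / 2) := by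
        apply mul_le_mul_of_nonneg_left _ hεpos.le
        linarith
      have a4 : ε * (2 * G + k ^ 2 + 1) * P t ^ 2 = k * P t ^ 2 := by rw [hεk]
      have a5 : 0 ≤ ε * P t ^ 2 := by positivity
      simp only [hh]
      linarith
  have sqlim : ∀ f : ℝ → ℝ, ∀ a : ℝ, 0 < a → (∀ t, a * f t ^ 2 ≤ h t) →
      Tendsto f atTop (nhds 0) := by
    intro f a ha hf
    have : Tendsto (fun t => f t ^ 2) atTop (nhds 0) := by
      refine squeeze_zero (fun t => sq_nonneg _) (fun t => ?_)
        (show Tendsto (fun t => h t / a) atTop (nhds 0) by simpa using hlim.div_const a)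
      rw [le_div_iff₀ ha]
      linarith [hf t]
    have h2 := this.sqrt
    simp only [Real.sqrt_sq_eq_abs, Real.sqrt_zero] at h2
    exact (tendsto_zero_iff_abs_tendsto_zero f).mpr h2
  have hPlim : Tendsto P atTop (nhds 0) := by
    refine sqlim P (k / 2) (by positivity) fun t => ?_
    have : 0 ≤ ε / 2 * g t ^ 2 := by positivity
    simp only [hh]
    linarith
  have hglim : Tendsto g atTop (nhds 0) := by
    refine sqlim g (ε / 2) (by positivity) fun t => ?_
    have : 0 ≤ k / 2 * P t ^ 2 := by positivity
    simp only [hh]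
    linarith
  refine ⟨?_, hPlim⟩
  have hpow : Tendsto (fun t => V t ^ n) atTop (nhds m) := by
    rw [tendsto_iff_dist_tendsto_zero]
    refine squeeze_zero' (Eventually.of_forall fun t => dist_nonneg) ?_
      (show Tendsto (fun t => |g t| / c) atTop (nhds 0) by simpa using hglim.abs.div_const c)
    filter_upwards [eventually_ge_atTop T] with t ht
    rw [Real.dist_eq, le_div_iff₀ hc,
      show g t = (V t ^ n - m) * V t by simp only [hg]; ring, abs_mul]
    exact mul_le_mul_of_nonneg_left ((hcV t ht).trans (le_abs_self _)) (abs_nonneg _)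
  refine (hpow.rpow_const (p := (1 : ℝ) / n) (Or.inl hm.ne')).congr' ?_
  filter_upwards [eventually_ge_atTop T] with t ht
  rw [one_div, Real.pow_rpow_inv_natCast (hVpos t ht).le (by omega)]

/-- For the limiting equation `U'' + (2/x)U' + U^p = 0` with
`U → 1`, `U' → 0` as `x → 0⁺`, the rescaled quantity `x^(2/(p-1)) U(x)` tends to `b∞`
and `x (x^(2/(p-1)) U(x))' → 0` as `x → ∞`. -/
theorem limit_equation_asymptotics (p : ℕ) (hp_odd : Odd p) (hp : 7 ≤ p)
    (U : ℝ → ℝ)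
    (hdiff : ∀ x : ℝ, 0 < x → DifferentiableAt ℝ U x)
    (hdiff2 : ∀ x : ℝ, 0 < x → DifferentiableAt ℝ (deriv U) x)
    (heq : ∀ x : ℝ, 0 < x →
      deriv (deriv U) x + (2 / x) * deriv U x + U x ^ p = 0)
    (hU0 : Tendsto U (nhdsWithin 0 (Ioi 0)) (nhds 1))
    (hU0' : Tendsto (deriv U) (nhdsWithin 0 (Ioi 0)) (nhds 0)) :
    Tendsto (fun x : ℝ => x ^ ((2 : ℝ) / ((p : ℝ) - 1)) * U x) atTop (nhds (bInfty p)) ∧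
    Tendsto (fun x : ℝ =>
        x * deriv (fun y : ℝ => y ^ ((2 : ℝ) / ((p : ℝ) - 1)) * U y) x)
      atTop (nhds 0) := by

  obtain ⟨n, rfl⟩ : ∃ n, p = n + 1 := ⟨p - 1, by omega⟩
  have hn : Even n := by
    rcases Nat.even_or_odd n with h | h
    · exact h
    · exact absurd hp_odd (Nat.not_odd_iff_even.mpr h.add_one)
  have hn6 : (6 : ℝ) ≤ n := by exact_mod_cast (by omega : 6 ≤ n)
  have hcast : ((n + 1 : ℕ) : ℝ) - 1 = n := by push_cast; ring
  rw [bInfty, hcast]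
  set α : ℝ := 2 / n with hα
  have hαpos : 0 < α := by positivity
  have hαn : α * n = 2 := by rw [hα]; field_simp
  have hα3 : 3 * α ≤ 1 := by nlinarith
  set m : ℝ := 2 * (((n + 1 : ℕ) : ℝ) - 3) / (n : ℝ) ^ 2 with hm
  have hmα : m = α * (1 - α) := by
    rw [hm, hα]; push_cast; field_simp; ring
  set V : ℝ → ℝ := fun t => exp (α * t) * U (exp t) with hVdef
  set P : ℝ → ℝ := fun t => exp (α * t) * (α * U (exp t) + exp t * deriv U (exp t)) with hPdef
  have hexp : ∀ t : ℝ, HasDerivAt (fun t => exp (α * t)) (exp (α * t) * α) t := by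
    intro t
    simpa using ((hasDerivAt_id t).const_mul α).exp
  have hUe : ∀ t : ℝ, HasDerivAt (fun t => U (exp t)) (deriv U (exp t) * exp t) t := fun t =>
    HasDerivAt.comp t (hdiff _ (exp_pos t)).hasDerivAt (Real.hasDerivAt_exp t)
  have hUe' : ∀ t : ℝ, HasDerivAt (fun t => deriv U (exp t))
      (deriv (deriv U) (exp t) * exp t) t := fun t =>
    HasDerivAt.comp t (hdiff2 _ (exp_pos t)).hasDerivAt (Real.hasDerivAt_exp t)
  have hV : ∀ t, HasDerivAt V (P t) t := by
    intro t
    refine ((hexp t).mul (hUe t)).congr_deriv ?_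
    simp only [hPdef]
    ring
  have hP : ∀ t, HasDerivAt P (-(1 - 2 * α) * P t - (V t ^ (n + 1) - m * V t)) t := by
    intro t
    refine ((hexp t).mul (((hUe t).const_mul α).add
      ((Real.hasDerivAt_exp t).mul (hUe' t)))).congr_deriv ?_
    have e1 : exp (α * t) ^ (n + 1) = exp (α * t) * exp t ^ 2 := by
      rw [← Real.exp_nat_mul, ← Real.exp_nat_mul, ← Real.exp_add]
      congr 1
      push_cast
      linear_combination t * hαn
    have e2 := heq _ (exp_pos t)
    have e3 : deriv (deriv U) (exp t) * exp t ^ 2 =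
        - 2 * exp t * deriv U (exp t) - exp t ^ 2 * U (exp t) ^ (n + 1) := by
      have := (exp_pos t).ne'
      field_simp at e2
      linear_combination exp t * e2
    simp only [hPdef, hVdef, mul_pow, e1, hmα, Pi.add_apply, Pi.mul_apply]
    linear_combination exp (α * t) * e3
  have hebot : Tendsto exp atBot (nhdsWithin 0 (Ioi 0)) := Real.tendsto_exp_atBot_nhdsGT
  have hUb : Tendsto (fun t => U (exp t)) atBot (nhds 1) := hU0.comp hebot
  have hUb' : Tendsto (fun t => deriv U (exp t)) atBot (nhds 0) := hU0'.comp hebot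
  have hQ : Tendsto (fun t => α * U (exp t) + exp t * deriv U (exp t)) atBot (nhds α) := by
    simpa using (hUb.const_mul α).add (Real.tendsto_exp_atBot.mul hUb')
  have hea : Tendsto (fun t => exp (α * t)) atBot (nhds 0) :=
    Real.tendsto_exp_atBot.comp (tendsto_id.const_mul_atBot hαpos)
  have hmain := autonomous_aux n hn (by omega) (1 - 2 * α) m (by linarith)
    (by rw [hmα]; exact mul_pos hαpos (by linarith)) V P hV hP
    (by simpa using hea.mul hUb) (by simpa using hea.mul hQ)
    (by
      filter_upwards [hUb.eventually (lt_mem_nhds (show (0 : ℝ) < 1 by norm_num))] with t ht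
      exact mul_pos (exp_pos _) ht)
    (by
      filter_upwards [hQ.eventually (lt_mem_nhds hαpos)] with t ht
      exact mul_pos (exp_pos _) ht)
  have hx : ∀ x : ℝ, 0 < x → exp (α * log x) = x ^ α := fun x hx => by
    rw [Real.rpow_def_of_pos hx, mul_comm]
  refine ⟨(hmain.1.comp Real.tendsto_log_atTop).congr' ?_,
    (hmain.2.comp Real.tendsto_log_atTop).congr' ?_⟩
  · filter_upwards [eventually_gt_atTop 0] with x hx0
    simp only [hVdef, Function.comp, hx x hx0, Real.exp_log hx0]
  · filter_upwards [eventually_gt_atTop 0] with x hx0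
    have hd := (Real.hasDerivAt_rpow_const (p := α) (Or.inl hx0.ne')).mul
      (hdiff x hx0).hasDerivAt
    have hd' : deriv (fun y : ℝ => y ^ α * U y) x = _ := hd.deriv
    rw [hd']
    simp only [hPdef, Function.comp, hx x hx0, Real.exp_log hx0]
    rw [Real.rpow_sub_one hx0.ne']
    field_simp
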